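/- Let Y be a real random variable distributed according to the Gaussian measure with mean μ ∈ ℝ and variance σ² where σ > 0, and let a ∈ ℝ. Then E[max(Y − a, 0)] = (μ − a)·Φ((μ − a)/σ) + σ·φ((μ − a)/σ), where φ is the standard normal probability density function and Φ the standard normal cumulative distribution function. -/

import Mathlib

open MeasureTheory Set ProbabilityTheory

/-- The standard normal probability density function φ. -/
noncomputable def stdNormalPDF (z : ℝ) : ℝ :=
  (1 / Real.sqrt (2 * Real.pi)) * Real.exp (-z ^ 2 / 2)

/-- The standard normal cumulative distribution function Φ. -/
noncomputable def stdNormalCDF (z : ℝ) : ℝ :=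
  ∫ t in Iic z, stdNormalPDF t

/-!
On the half-line `[a, ∞)` split `y - a = (μ - a) + (y - μ)`. The constant contributes `μ - a` times
the tail probability; the centred term integrates exactly, because `(y - μ)` times the density of
`N(μ, v)` is the derivative of `-v` times that density. Standardising by the decreasing map
`z ↦ μ - σ z` turns the upper tail at `a` directly into `Φ((μ - a) / σ)`.
-/

open Filter Topology
open scoped NNReal

section GaussianDensity

variable {E : Type*} [NormedAddCommGroup E] [NormedSpace ℝ E] {μ : ℝ} {v : ℝ≥0}

lemma integrable_gaussianReal_iff (hv : v ≠ 0) {f : ℝ → E} :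
    Integrable f (gaussianReal μ v) ↔ Integrable fun x ↦ gaussianPDFReal μ v x • f x := by
  rw [gaussianReal_of_var_ne_zero μ hv, integrable_withDensity_iff_integrable_smul'
    (measurable_gaussianPDF μ v) (ae_of_all _ fun _ ↦ gaussianPDF_lt_top)]
  simp only [toReal_gaussianPDF]

lemma setIntegral_gaussianReal_eq_setIntegral_smul (hv : v ≠ 0) {s : Set ℝ}
    (hs : MeasurableSet s) (f : ℝ → E) :
    ∫ x in s, f x ∂gaussianReal μ v = ∫ x in s, gaussianPDFReal μ v x • f x := by
  rw [← integral_indicator hs, integral_gaussianReal_eq_integral_smul hv, ← integral_indicator hs]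
  simp only [indicator_smul]

end GaussianDensity

lemma hasDerivAt_gaussianPDFReal (μ : ℝ) (v : ℝ≥0) (x : ℝ) :
    HasDerivAt (gaussianPDFReal μ v) (-((x - μ) / v * gaussianPDFReal μ v x)) x := by
  have hexponent : HasDerivAt (fun y ↦ -(y - μ) ^ 2 / (2 * v)) (-((x - μ) / v)) x :=
    ((((hasDerivAt_id' x).sub_const μ).fun_pow 2).fun_neg.div_const (2 * v : ℝ)).congr_deriv
      (by field)
  exact (hexponent.exp.const_mul (√(2 * Real.pi * v))⁻¹).congr_deriv
    (by simp only [gaussianPDFReal]; ring)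

lemma integrable_sub_const_gaussianReal (μ : ℝ) (v : ℝ≥0) (c : ℝ) :
    Integrable (fun y ↦ y - c) (gaussianReal μ v) :=
  (memLp_one_iff_integrable.1 (memLp_id_gaussianReal 1)).sub (integrable_const c)

lemma setIntegral_Ici_sub_mean_gaussianReal (μ : ℝ) (v : ℝ≥0) (a : ℝ) :
    ∫ y in Ici a, (y - μ) ∂gaussianReal μ v = v * gaussianPDFReal μ v a := by
  obtain rfl | hv := eq_or_ne v 0
  · have hcentered : (fun y ↦ y - μ) =ᵐ[Measure.dirac μ] 0 := by
      simp only [ae_dirac_eq, EventuallyEq, eventually_pure, sub_self, Pi.zero_apply]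
    rw [gaussianReal_zero_var, integral_eq_zero_of_ae (ae_restrict_of_ae hcentered),
      NNReal.coe_zero, zero_mul]
  have hv' : (v : ℝ) ≠ 0 := by exact_mod_cast hv
  have hderiv (y : ℝ) : HasDerivAt (fun y ↦ -(v * gaussianPDFReal μ v y))
      (gaussianPDFReal μ v y • (y - μ)) y :=
    ((hasDerivAt_gaussianPDFReal μ v y).const_mul (v : ℝ)).fun_neg.congr_deriv
      (by rw [smul_eq_mul]; field)
  have hint : Integrable fun y ↦ gaussianPDFReal μ v y • (y - μ) :=
    (integrable_gaussianReal_iff hv).1 (integrable_sub_const_gaussianReal μ v μ)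
  have hlim : Tendsto (fun y ↦ -(v * gaussianPDFReal μ v y)) atTop (𝓝 0) :=
    tendsto_zero_of_hasDerivAt_of_integrableOn_Ioi (a := a) (fun y _ ↦ hderiv y)
      hint.integrableOn ((integrable_gaussianPDFReal μ v).const_mul _).neg.integrableOn
  rw [setIntegral_gaussianReal_eq_setIntegral_smul hv measurableSet_Ici,
    integral_Ici_eq_integral_Ioi,
    integral_Ioi_of_hasDerivAt_of_tendsto' (fun y _ ↦ hderiv y) hint.integrableOn hlim,
    zero_sub, neg_neg]

lemma integral_max_sub_zero_eq_setIntegral_Ici (ν : Measure ℝ) (a : ℝ) :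
    ∫ y, max (y - a) 0 ∂ν = ∫ y in Ici a, (y - a) ∂ν := by
  rw [← integral_indicator measurableSet_Ici]
  congr with y
  obtain hy | hy := le_or_gt a y
  · rw [indicator_of_mem (mem_Ici.2 hy), max_eq_left (sub_nonneg.2 hy)]
  · rw [indicator_of_notMem (notMem_Ici.2 hy), max_eq_right (sub_nonpos.2 hy.le)]

lemma integral_max_sub_zero_gaussianReal (μ : ℝ) (v : ℝ≥0) (a : ℝ) :
    ∫ y, max (y - a) 0 ∂gaussianReal μ v =
      (μ - a) * (gaussianReal μ v).real (Ici a) + v * gaussianPDFReal μ v a := by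
  calc ∫ y, max (y - a) 0 ∂gaussianReal μ v
      = ∫ y in Ici a, ((μ - a) + (y - μ)) ∂gaussianReal μ v := by
        simp only [integral_max_sub_zero_eq_setIntegral_Ici, sub_add_sub_cancel']
    _ = (μ - a) * (gaussianReal μ v).real (Ici a) + v * gaussianPDFReal μ v a := by
        rw [integral_add (integrable_const _)
          (integrable_sub_const_gaussianReal μ v μ).integrableOn, setIntegral_const, smul_eq_mul,
          mul_comm, setIntegral_Ici_sub_mean_gaussianReal]

lemma gaussianPDFReal_zero_one : gaussianPDFReal 0 1 = stdNormalPDF := by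
  ext z
  simp [gaussianPDFReal, stdNormalPDF]

lemma measureReal_gaussianReal_zero_one_Iic (z : ℝ) :
    (gaussianReal 0 1).real (Iic z) = stdNormalCDF z := by
  rw [← setIntegral_one_eq_measureReal,
    setIntegral_gaussianReal_eq_setIntegral_smul one_ne_zero measurableSet_Iic,
    gaussianPDFReal_zero_one, stdNormalCDF]
  simp only [smul_eq_mul, mul_one]

lemma stdNormalPDF_sub_div (μ x : ℝ) {σ : ℝ} (hσ : σ ≠ 0) :
    stdNormalPDF ((μ - x) / σ) = |σ| * gaussianPDFReal μ (.mk (σ ^ 2) (sq_nonneg σ)) x := by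
  rw [← gaussianPDFReal_zero_one, div_eq_inv_mul, gaussianPDFReal_inv_mul hσ, mul_zero, mul_one]
  simp only [gaussianPDFReal, sub_zero, sub_sq_comm μ x]

lemma gaussianReal_zero_one_map_sub_mul (μ σ : ℝ) :
    (gaussianReal 0 1).map (fun z ↦ μ - σ * z) = gaussianReal μ (.mk (σ ^ 2) (sq_nonneg σ)) := by
  have h := Measure.map_map (μ := gaussianReal 0 1) (g := fun z : ℝ ↦ μ - z)
    (f := fun z : ℝ ↦ σ * z) (by fun_prop) (by fun_prop)
  rw [gaussianReal_map_const_mul, gaussianReal_map_const_sub] at h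
  simp only [mul_zero, mul_one, sub_zero] at h
  exact h.symm

lemma measureReal_gaussianReal_Ici (μ a : ℝ) {σ : ℝ} (hσ : 0 < σ) :
    (gaussianReal μ (.mk (σ ^ 2) (sq_nonneg σ))).real (Ici a) = stdNormalCDF ((μ - a) / σ) := by
  have hpreimage : (fun z ↦ μ - σ * z) ⁻¹' Ici a = Iic ((μ - a) / σ) := by
    ext z
    rw [mem_preimage, mem_Ici, mem_Iic, le_div_iff₀' hσ, le_sub_comm]
  rw [← gaussianReal_zero_one_map_sub_mul, map_measureReal_apply (by fun_prop) measurableSet_Ici,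
    hpreimage, measureReal_gaussianReal_zero_one_Iic]

/-- If `Y ~ N(μ, σ²)` with `σ > 0`, then
`E[max(Y − a, 0)] = (μ − a)·Φ((μ − a)/σ) + σ·φ((μ − a)/σ)`. -/
theorem expectedImprovement_gaussian (μ a σ : ℝ) (hσ : 0 < σ) :
    ∫ y, max (y - a) 0 ∂(gaussianReal μ ⟨σ ^ 2, sq_nonneg σ⟩) =
      (μ - a) * stdNormalCDF ((μ - a) / σ) + σ * stdNormalPDF ((μ - a) / σ) := by
  let v : ℝ≥0 := .mk (σ ^ 2) (sq_nonneg σ)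
  calc ∫ y, max (y - a) 0 ∂gaussianReal μ v
      = (μ - a) * (gaussianReal μ v).real (Ici a) + σ ^ 2 * gaussianPDFReal μ v a :=
        integral_max_sub_zero_gaussianReal μ v a
    _ = (μ - a) * stdNormalCDF ((μ - a) / σ) + σ * stdNormalPDF ((μ - a) / σ) := by
        rw [measureReal_gaussianReal_Ici μ a hσ, stdNormalPDF_sub_div μ a hσ.ne', abs_of_pos hσ]
        ring
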